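/- Let G be a finite group with o(G) = 13/6. Then G is isomorphic to the symmetric group S_3 on 3 letters. -/

import Mathlib

/-- The average element order `o(G) = ψ(G)/|G|` of a finite group `G`,
where `ψ(G) = ∑_{x ∈ G} |x|` is the sum of the orders of all elements of `G`. -/
noncomputable def avgOrder (G : Type*) [Group G] [Fintype G] : ℚ :=
  (∑ x : G, (orderOf x : ℚ)) / (Fintype.card G : ℚ)

open Finset in
/-- If more than three quarters of the elements square to one, all do. -/
theorem sq_eq_one_of_many {G : Type*} [Group G] [Fintype G] [DecidableEq G]
    (h : 3 * Fintype.card G < 4 * (univ.filter fun x : G => x * x = 1).card) (g : G) :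
    g * g = 1 := by
  set I : Finset G := univ.filter fun x : G => x * x = 1 with hI
  have memI : ∀ x, x ∈ I ↔ x * x = 1 := fun x => by simp [hI]
  have big : ∀ H : Subgroup G, ∀ S : Finset G, (∀ x ∈ S, x ∈ H) →
      Fintype.card G < 2 * S.card → H = ⊤ := by
    classical
    intro H S hS hc
    have h1 : S.card ≤ Nat.card H := by
      rw [Nat.card_eq_fintype_card, Fintype.card_subtype]
      exact card_le_card fun x hx => by simpa using hS x hx
    have h2 := H.card_mul_index
    rw [Nat.card_eq_fintype_card (α := G)] at h2
    have hpos : 0 < Fintype.card G := Fintype.card_pos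
    rw [← Subgroup.index_eq_one]
    have h3 : H.index < 2 := by
      by_contra hh
      have : Nat.card H * 2 ≤ Nat.card H * H.index := Nat.mul_le_mul_left _ (by omega)
      omega
    have h4 : H.index ≠ 0 := by
      intro h0; rw [h0] at h2; omega
    omega
  have hIc : ∀ x ∈ I, x ∈ Subgroup.center G := by
    intro x hx
    have hx2 := (memI x).1 hx
    set J : Finset G := I.image (fun y => x⁻¹ * y) with hJ
    have hJc : J.card = I.card := card_image_of_injective _ (mul_right_injective _)
    have hu := card_union_add_card_inter I J
    have hle : (I ∪ J).card ≤ Fintype.card G := card_le_univ _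
    have ht := big (Subgroup.centralizer {x}) (I ∩ J) (by
      intro y hy
      rw [mem_inter] at hy
      obtain ⟨hy1, hy2⟩ := hy
      obtain ⟨z, hz, rfl⟩ := mem_image.1 hy2
      rw [memI] at hz hy1
      rw [Subgroup.mem_centralizer_singleton_iff]
      have hxi : x⁻¹ = x := inv_eq_of_mul_eq_one_left hx2
      rw [hxi] at hy1 ⊢
      have hz' : z⁻¹ = z := inv_eq_of_mul_eq_one_left hz
      have e : (x * z)⁻¹ = x * z := inv_eq_of_mul_eq_one_left hy1
      rw [mul_inv_rev, hxi, hz'] at e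
      rw [mul_assoc, e]) (by omega)
    rw [Subgroup.mem_center_iff]
    intro g
    have hg : g ∈ Subgroup.centralizer {x} := by rw [ht]; trivial
    exact (Subgroup.mem_centralizer_singleton_iff.1 hg)
  have hZ := big (Subgroup.center G) I hIc (by omega)
  have comm : ∀ a b : G, a * b = b * a := by
    intro a b
    have hb : b ∈ Subgroup.center G := by rw [hZ]; trivial
    exact (Subgroup.mem_center_iff.1 hb) a
  let K : Subgroup G :=
    { carrier := {x | x * x = 1}
      one_mem' := by simp
      mul_mem' := by
        intro a b ha hb
        simp only [Set.mem_ofPred_eq] at *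
        rw [mul_assoc, ← mul_assoc b, comm b a, mul_assoc, hb, mul_one, ha]
      inv_mem' := by
        intro a ha
        simp only [Set.mem_ofPred_eq] at *
        rw [← mul_inv_rev, ha, inv_one] }
  have hK := big K I (fun x hx => (memI x).1 hx) (by omega)
  have hg : g ∈ K := by rw [hK]; trivial
  exact hg

open Finset in
theorem iso_symmGroup_three_of_avgOrder_eq {G : Type*} [Group G] [Fintype G]
    (h : avgOrder G = 13 / 6) : Nonempty (G ≃* Equiv.Perm (Fin 3)) := by
  classical
  have hpos : 0 < Fintype.card G := Fintype.card_pos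
  have hq : (6 : ℚ) * ∑ x : G, (orderOf x : ℚ) = 13 * Fintype.card G := by
    unfold avgOrder at h
    have : (Fintype.card G : ℚ) ≠ 0 := by positivity
    field_simp at h
    linarith
  have hz : (6 : ℤ) * ∑ x : G, (orderOf x : ℤ) = 13 * Fintype.card G := by exact_mod_cast hq
  have hf : ∑ x : G, ((orderOf x : ℤ) - 2) = ∑ x : G, (orderOf x : ℤ) - 2 * Fintype.card G := by
    rw [sum_sub_distrib]; simp; ring
  have hdvd : 6 ∣ Fintype.card G := by omega
  obtain ⟨c, hc⟩ := exists_prime_orderOf_dvd_card (G := G) 3 (by omega)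
  obtain ⟨t, ht⟩ := exists_prime_orderOf_dvd_card (G := G) 2 (by omega)
  have ho1 : ∀ x : G, x ≠ 1 → 2 ≤ orderOf x := by
    intro x hx
    have := orderOf_pos x
    have h2 : orderOf x ≠ 1 := fun h => hx (orderOf_eq_one_iff.1 h)
    omega
  have ho2 : ∀ x : G, x * x ≠ 1 → 3 ≤ orderOf x := by
    intro x hx
    have h1 := ho1 x (by rintro rfl; simp at hx)
    have h2 : orderOf x ≠ 2 := fun h => hx (by rw [← pow_two, ← h, pow_orderOf_eq_one])
    omega
  have hcc : c * c ≠ 1 := by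
    intro hh
    have := orderOf_dvd_of_pow_eq_one (show c ^ 2 = 1 by rw [pow_two, hh])
    rw [hc] at this; omega
  have hc1 : c ≠ 1 := by rintro rfl; simp at hcc
  have hci : c ≠ c⁻¹ := fun hh => hcc (mul_eq_one_iff_eq_inv.2 hh)
  -- size bound
  have hn : Fintype.card G ≤ 12 := by
    by_contra hlt
    apply hcc
    apply sq_eq_one_of_many
    have key : ∑ x : G, (3 - (if x * x = 1 then 1 else 0) - (if x = 1 then 1 else 0) : ℤ)
        ≤ ∑ x : G, (orderOf x : ℤ) := by
      apply sum_le_sum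
      intro x _
      by_cases h1 : x = 1
      · subst h1; simp
      · by_cases h2 : x * x = 1
        · have := ho1 x h1
          simp [h1, h2]; omega
        · have := ho2 x h2
          simp [h1, h2]; omega
    simp only [sum_sub_distrib, sum_boole] at key
    simp at key
    have hone : (univ.filter fun x : G => x = 1).card = 1 := by
      rw [card_eq_one]; exact ⟨1, by ext x; simp⟩
    omega
  -- split the sum
  set S : Finset G := univ \ {1, c, c⁻¹} with hS
  have hsplit : ∑ x ∈ S, ((orderOf x : ℤ) - 2) + 1 = ∑ x : G, ((orderOf x : ℤ) - 2) := by
    rw [← sum_sdiff (subset_univ ({1, c, c⁻¹} : Finset G)),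
      sum_insert (by simp [hc1.symm, hc1]), sum_insert (by simp [hci]), sum_singleton,
      orderOf_inv, hc, orderOf_one]
    norm_num only
    rfl
  have hnn : ∀ x ∈ S, (0 : ℤ) ≤ (orderOf x : ℤ) - 2 := by
    intro x hx
    have := ho1 x (by rintro rfl; simp [hS] at hx)
    omega
  have h6 : Fintype.card G = 6 := by
    by_contra hne
    have h12 : Fintype.card G = 12 := by omega
    have hs1 : ∑ x ∈ S, ((orderOf x : ℤ) - 2) = 1 := by omega
    obtain ⟨d, hd, hd0⟩ := exists_ne_zero_of_sum_ne_zero (by rw [hs1]; norm_num :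
      ∑ x ∈ S, ((orderOf x : ℤ) - 2) ≠ 0)
    have hd1 := hnn d hd
    have hdd : d ≠ d⁻¹ := by
      intro hh
      have h2 := Nat.le_of_dvd (by norm_num) (orderOf_dvd_of_pow_eq_one
        (show d ^ 2 = 1 by rw [pow_two, mul_eq_one_iff_eq_inv, ← hh]))
      omega
    have hdS : d⁻¹ ∈ S := by
      simp only [hS, mem_sdiff, mem_univ, true_and, mem_insert, mem_singleton, not_or] at hd ⊢
      refine ⟨by simpa using hd.1, ?_, by simpa using hd.2.1⟩
      intro hh; exact hd.2.2 (by rw [← hh, inv_inv])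
    have hle := sum_le_sum_of_subset_of_nonneg (s := {d, d⁻¹}) (t := S)
      (f := fun x => (orderOf x : ℤ) - 2) (by
        intro x hx; simp at hx; rcases hx with rfl | rfl <;> assumption)
      (fun x hx _ => hnn x hx)
    rw [sum_pair hdd, orderOf_inv] at hle
    omega
  have hs0 : ∑ x ∈ S, ((orderOf x : ℤ) - 2) = 0 := by omega
  have hle3 : ∀ x : G, orderOf x ≤ 3 := by
    intro x
    by_cases hx : x ∈ S
    · have := (sum_eq_zero_iff_of_nonneg hnn).1 hs0 x hx
      omega
    · simp [hS] at hx
      by_cases h1 : x = 1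
      · subst h1; simp
      · by_cases h2 : x = c
        · rw [h2, hc]
        · rw [hx h1 h2, orderOf_inv, hc]
  -- action on cosets
  let H : Subgroup G := Subgroup.zpowers t
  have hH : Nat.card H = 2 := by rw [Nat.card_zpowers, ht]
  have hidx : Nat.card (G ⧸ H) = 3 := by
    have := H.card_mul_index
    rw [hH, Nat.card_eq_fintype_card, h6] at this
    change H.index = 3
    omega
  have hinj : Function.Injective (MulAction.toPermHom G (G ⧸ H)) := by
    rw [← MonoidHom.ker_eq_bot_iff, ← Subgroup.normalCore_eq_ker, Subgroup.eq_bot_iff_forall]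
    by_contra hcon
    push Not at hcon
    obtain ⟨x, hx, hx1⟩ := hcon
    have memH : ∀ y ∈ H, y = 1 ∨ y = t := by
      intro y hy
      obtain ⟨k, hk, rfl⟩ := (mem_zpowers_iff_mem_range_orderOf.1 hy : y ∈ _) |> mem_image.1
      rw [ht] at hk
      have : k < 2 := by simpa using hk
      interval_cases k <;> simp
    have hxt : x = t := (memH x (Subgroup.normalCore_le H hx)).resolve_left hx1
    subst hxt
    have hcx : c * x * c⁻¹ = x := by
      refine (memH _ (hx c)).resolve_left ?_
      intro hh
      exact hx1 (by simpa using hh)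
    have hcomm : Commute c x := by
      have := congrArg (· * c) hcx
      exact (by simpa using this : c * x = x * c)
    have := hcomm.orderOf_mul_eq_mul_orderOf_of_coprime (by rw [hc, ht]; norm_num)
    have h3 := hle3 (c * x)
    rw [hc, ht] at this
    omega
  have e : (G ⧸ H) ≃ Fin 3 := Finite.equivFinOfCardEq hidx
  have hbij : Function.Bijective (MulAction.toPermHom G (G ⧸ H)) := by
    rw [Fintype.bijective_iff_injective_and_card]
    refine ⟨hinj, ?_⟩
    rw [h6, Fintype.card_congr e.permCongr, Fintype.card_perm]
    rfl
  exact ⟨(MulEquiv.ofBijective _ hbij).trans e.permCongrHom⟩
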